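/- For every integer r ≥ 1, the following identity holds in ℚ(q): 2·(q−1)^r q^(2r) I E/(q^2 G) − (q−1)^r I E/G + S1 + S2 + S3 = (1/3)(q^2+q+1)^r (q−1)^2 q^3 (q+1) + (q^2+q+1)(2q^(2r)−q^2)(q−1)^(2r) q^r (q+1)^r − (1/3)(q−1)^(2r)(q+1)(q^2+q+1)(3q^(3r) − 3q^(r+2) + q^3), where E = q^8−q^6−q^5+q^3, G = (q^2−1)(q^2−q), I = (q^3−q)^r − (1/2)(q^2−q)(q+1)^r − (1/2)(q^2+q)(q−1)^r − (q^(r−1)−1)(q−1)^(r−1)(q^3−q), S1 = 3^r(1 + (1+q+q^2)(q^(3r+1) + q^(3r) − 2q^(2r+1) + q − 1)), S2 = ((q−1)^r − 3^r)(q^2+q+1)(3q^(3r+1) + 3q^(3r) − 2q^(2r+2) − 4q^(2r+1) + q^3), and S3 = (2·3^r − 3(q−1)^r + (q−1)^(2r))(q+1)(q^2+q+1)(q^r−q)(q^2 + q^(2r) − q^(r+1)) + (2·3^r − 2(q−1)^r + (q−1)^(2r) − (q^2−1)^r)·q·(q^2+q+1)(q^r−q)(q^r−q^2) + (2·3^r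 − 4(q−1)^r + (q−1)^(2r) + (q^2−1)^r)·q^2·(q^2+q+1)(q^r−1)(q^r−q) + (1/6)q^3((q−1)^(2r) − 3(q^2−1)^r + 2(q^2+q+1)^r + 2q(q+1)(3^(r+1) − 3(q−1)^r + (q−1)^(2r) − (q^2+q+1)^r)) + (1/6)q^6(−6(q−1)^r + (q−1)^(2r) + 3(q^2−1)^r + 2(q^2+q+1)^r). (This is the computation of the E-polynomial of the space of reducible representations of F_r in SL(3,ℂ) as a sum of strata.) -/

import Mathlib

/-- The variable `q`, viewed as a rational function in `ℚ(q)`. -/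
noncomputable def q : RatFunc ℚ := RatFunc.X

/-- `E = e(SL(3,ℂ))`. -/
noncomputable def E : RatFunc ℚ := q^8 - q^6 - q^5 + q^3

/-- `G = e(GL(2,ℂ))`. -/
noncomputable def G : RatFunc ℚ := (q^2 - 1) * (q^2 - q)

/-- `I = e(R^irr_{r,2})`, the E-polynomial of the space of irreducible
representations of `F_r` in `SL(2,ℂ)`. -/
noncomputable def I (r : ℕ) : RatFunc ℚ :=
  (q^3 - q)^r - (1/2) * (q^2 - q) * (q + 1)^r - (1/2) * (q^2 + q) * (q - 1)^r
    - (q^(r-1) - 1) * (q - 1)^(r-1) * (q^3 - q)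

/-- `S1 = e(R_1)`. -/
noncomputable def S1 (r : ℕ) : RatFunc ℚ :=
  3^r * (1 + (1 + q + q^2) * (q^(3*r+1) + q^(3*r) - 2 * q^(2*r+1) + q - 1))

/-- `S2 = e(R_2)`. -/
noncomputable def S2 (r : ℕ) : RatFunc ℚ :=
  ((q - 1)^r - 3^r) * (q^2 + q + 1)
    * (3 * q^(3*r+1) + 3 * q^(3*r) - 2 * q^(2*r+2) - 4 * q^(2*r+1) + q^3)

/-- `S3 = e(R_3)`. -/
noncomputable def S3 (r : ℕ) : RatFunc ℚ :=
  (2 * 3^r - 3 * (q - 1)^r + (q - 1)^(2*r)) * (q + 1) * (q^2 + q + 1)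
      * (q^r - q) * (q^2 + q^(2*r) - q^(r+1))
    + (2 * 3^r - 2 * (q - 1)^r + (q - 1)^(2*r) - (q^2 - 1)^r) * q
      * (q^2 + q + 1) * (q^r - q) * (q^r - q^2)
    + (2 * 3^r - 4 * (q - 1)^r + (q - 1)^(2*r) + (q^2 - 1)^r) * q^2
      * (q^2 + q + 1) * (q^r - 1) * (q^r - q)
    + (1/6) * q^3 * ((q - 1)^(2*r) - 3 * (q^2 - 1)^r + 2 * (q^2 + q + 1)^r
        + 2 * q * (q + 1)
          * (3^(r+1) - 3 * (q - 1)^r + (q - 1)^(2*r) - (q^2 + q + 1)^r))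
    + (1/6) * q^6 * (-6 * (q - 1)^r + (q - 1)^(2*r) + 3 * (q^2 - 1)^r
        + 2 * (q^2 + q + 1)^r)

/-
Sort the reducible representations by their irreducible constituents: one of dimension two and a
character for `R_0`, three characters of which three, two or none coincide for `R_1`, `R_2`, `R_3`.
The coefficient of `3^r` (triples of equal characters) in `S3` is that of `(q - 1)^r` (triples with
two equal characters) in `S2` minus that of `3^r` in `S1`, and the coefficient of `(q - 1)^r` in
`S3` is minus the one in `S2`, as inclusion-exclusion over coincidences predicts. So
`S1 + S2 + S3` retains only one term for each conjugacy class of the Weyl group `S_3`, namely in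
`(q - 1)^(2r)`, `(q^2 - 1)^r` and `(q^2 + q + 1)^r`. The `(q^2 - 1)^r` term is cancelled by the one
that the closed form of `I` contributes to `e(R_0)`.
-/

/-- `S0 = e(R_0)`, where `R_0` consists of the reducible representations with an irreducible
two-dimensional constituent. The two terms regroup `(q - 1)^r * I r * E / G` times
`2 * (q^(2*r) - q^2) / q^2 + 1`: the non-split extensions of either order, and the split ones. -/
noncomputable def S0 (r : ℕ) : RatFunc ℚ :=
  2 * (q - 1)^r * q^(2*r) * I r * E / (q^2 * G) - (q - 1)^r * I r * E / G

theorem ratFunc_X_sub_C_ne_zero {R : Type*} [CommRing R] [IsDomain R] (a : R) :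
    (RatFunc.X - RatFunc.C a : RatFunc R) ≠ 0 := by
  rw [← RatFunc.algebraMap_X, ← RatFunc.algebraMap_C, ← map_sub]
  exact RatFunc.algebraMap_ne_zero (Polynomial.X_sub_C_ne_zero a)

theorem G_ne_zero : G ≠ 0 := by
  have hq : q ≠ 0 := RatFunc.X_ne_zero
  have hq_sub : q - 1 ≠ 0 := by simpa [q] using ratFunc_X_sub_C_ne_zero (1 : ℚ)
  have hq_add : q + 1 ≠ 0 := by simpa [q] using ratFunc_X_sub_C_ne_zero (-1 : ℚ)
  have hG : G = q * (q - 1)^2 * (q + 1) := by rw [G]; ring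
  rw [hG]
  exact mul_ne_zero (mul_ne_zero hq (pow_ne_zero 2 hq_sub)) hq_add

theorem E_div_G : E / G = q^2 * (q^2 + q + 1) := by
  rw [div_eq_iff G_ne_zero, E, G]
  ring

theorem E_div_sq_mul_G : E / (q^2 * G) = q^2 + q + 1 := by
  rw [mul_comm, ← div_div, E_div_G, mul_div_cancel_left₀ _ (pow_ne_zero 2 RatFunc.X_ne_zero)]

theorem I_eq {r : ℕ} (hr : 1 ≤ r) :
    I r = q^r * (q^2 - 1)^r - (1/2) * (q^2 - q) * (q + 1)^r
      - (1/2) * (q^2 + q) * (q - 1)^r - (q^r - q) * (q - 1)^r * (q + 1) := by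
  obtain ⟨n, rfl⟩ := Nat.exists_eq_add_of_le' hr
  have hpow : (q^3 - q)^(n + 1) = q^(n + 1) * (q^2 - 1)^(n + 1) := by
    rw [← mul_pow]; congr 1; ring
  rw [I, hpow, Nat.add_sub_cancel]
  ring

theorem S0_eq_mul_I (r : ℕ) :
    S0 r = (q^2 + q + 1) * (2 * q^(2*r) - q^2) * (q - 1)^r * I r := by
  rw [S0, mul_div_assoc, mul_div_assoc, E_div_sq_mul_G, E_div_G]
  ring

theorem S0_eq {r : ℕ} (hr : 1 ≤ r) :
    S0 r = (q^2 + q + 1) * (2 * q^(2*r) - q^2)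
      * (q^r * (q - 1)^(2*r) * (q + 1)^r - (1/2) * (q^2 - q) * (q^2 - 1)^r
        - (q + 1) * (q^r - (1/2) * q) * (q - 1)^(2*r)) := by
  have hpow : (q^2 - 1)^r = (q - 1)^r * (q + 1)^r := by
    rw [← mul_pow]; congr 1; ring
  rw [S0_eq_mul_I, I_eq hr, hpow]
  ring

theorem S1_eq (r : ℕ) :
    S1 r = 3^r * ((q^2 + q + 1) * ((q + 1) * q^(3*r) - 2 * q * q^(2*r)) + q^3) := by
  rw [S1]
  ring

theorem S2_eq (r : ℕ) :
    S2 r = ((q - 1)^r - 3^r) * (q^2 + q + 1)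
      * (3 * (q + 1) * q^(3*r) - 2 * q * (q + 2) * q^(2*r) + q^3) := by
  rw [S2]
  ring

theorem S3_eq (r : ℕ) :
    S3 r = (q + 1) * (q^2 + q + 1) * (q^(3*r) - q * q^(2*r) + (1/6) * q^3)
          * (q - 1)^(2*r)
      + (q^2 + q + 1) * ((1/2) * (q^2 - q)) * (2 * q^(2*r) - q^2) * (q^2 - 1)^r
      + (1/3) * (q - 1)^2 * q^3 * (q + 1) * (q^2 + q + 1)^r
      - (q^2 + q + 1) * (3 * (q + 1) * q^(3*r) - 2 * q * (q + 2) * q^(2*r) + q^3)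
          * (q - 1)^r
      + ((q^2 + q + 1) * (2 * (q + 1) * q^(3*r) - 2 * q * (q + 1) * q^(2*r) + q^3)
          - q^3) * 3^r := by
  rw [S3]
  ring

theorem S1_add_S2_add_S3 (r : ℕ) :
    S1 r + S2 r + S3 r
      = (q + 1) * (q^2 + q + 1) * (q^(3*r) - q * q^(2*r) + (1/6) * q^3)
          * (q - 1)^(2*r)
        + (q^2 + q + 1) * ((1/2) * (q^2 - q)) * (2 * q^(2*r) - q^2) * (q^2 - 1)^r
        + (1/3) * (q - 1)^2 * q^3 * (q + 1) * (q^2 + q + 1)^r := by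
  rw [S1_eq, S2_eq, S3_eq]
  ring

/-- The E-polynomial of the space of reducible representations of `F_r` in
`SL(3,ℂ)`, computed as a sum of strata. -/
theorem e_reducible_representations_sl3 (r : ℕ) (hr : 1 ≤ r) :
    2 * (q - 1)^r * q^(2*r) * I r * E / (q^2 * G) - (q - 1)^r * I r * E / G
      + S1 r + S2 r + S3 r
    = (1/3) * (q^2 + q + 1)^r * (q - 1)^2 * q^3 * (q + 1)
      + (q^2 + q + 1) * (2 * q^(2*r) - q^2) * (q - 1)^(2*r) * q^r * (q + 1)^r
      - (1/3) * (q - 1)^(2*r) * (q + 1) * (q^2 + q + 1)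
          * (3 * q^(3*r) - 3 * q^(r+2) + q^3) := by
  calc
    S0 r + S1 r + S2 r + S3 r = S0 r + (S1 r + S2 r + S3 r) := by ring
    _ = _ := by rw [S0_eq hr, S1_add_S2_add_S3]; ring
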